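/- Applicative similarity ≲app = (≲app_v, ≲app_c) for the fine-grain call-by-value combinatory logic xCL_fg is a congruence, i.e., it is compatible with all operators of both sorts: ≲app_v(S,S), ≲app_v(K,K), ≲app_v(I,I); ≲app_c(t,s) implies ≲app_v(K'(t),K'(s)) and ≲app_v(S'(t),S'(s)); ≲app_c(t,s) and ≲app_c(t',s') imply ≲app_v(S''(t,t'),S''(s,s')) and ≲app_c(t • t', s • s'); ≲app_v(v,w) implies ≲app_c([v],[w]); ≲app_v(v,w) and ≲app_c(t,s) imply ≲app_c(v ▷ t, w ▷ s) and ≲app_c(t ◁ v, s ◁ w); and ≲app_v(v,w) and ≲app_v(v',w') imply ≲app_c(v ∘ v', w ∘ w'). -/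

import Mathlib

namespace FG

mutual
/-- Values of the fine-grain call-by-value combinatory logic xCL_fg. -/
inductive V : Type
  | I : V
  | K : V
  | S : V
  | K1 (t : C) : V
  | S1 (t : C) : V
  | S2 (s t : C) : V
/-- Computations of xCL_fg. -/
inductive C : Type
  | ret (v : V) : C            -- [v]
  | bull (t s : C) : C         -- t • s
  | rtri (v : V) (s : C) : C   -- v ▷ s
  | ltri (t : C) (v : V) : C   -- t ◁ v
  | circ (v w : V) : C         -- v ∘ w
end

/-- Labeled transitions `v —u→ t` from values to computations (`LStep v u t`). -/
inductive LStep : V → V → C → Prop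
  | S (v : V) : LStep .S v (.ret (.S1 (.ret v)))
  | S1 (t : C) (v : V) : LStep (.S1 t) v (.ret (.S2 t (.ret v)))
  | S2 (t s : C) (v : V) : LStep (.S2 t s) v (.bull (.ltri t v) (.ltri s v))
  | K (v : V) : LStep .K v (.ret (.K1 (.ret v)))
  | K1 (t : C) (v : V) : LStep (.K1 t) v t
  | I (v : V) : LStep .I v (.ret v)

/-- Unlabeled transitions from computations to values: `t → v`. -/
inductive StepV : C → V → Prop
  | ret (v : V) : StepV (.ret v) v

/-- Unlabeled transitions from computations to computations: `t → t'`. -/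
inductive StepC : C → C → Prop
  | bullL {t t' : C} (s : C) : StepC t t' → StepC (.bull t s) (.bull t' s)
  | bullV {t : C} {v : V} (s : C) : StepV t v → StepC (.bull t s) (.rtri v s)
  | ltriL {t t' : C} (v : V) : StepC t t' → StepC (.ltri t v) (.ltri t' v)
  | ltriV {t : C} {v : V} (w : V) : StepV t v → StepC (.ltri t w) (.circ v w)
  | rtriR {s s' : C} (v : V) : StepC s s' → StepC (.rtri v s) (.rtri v s')
  | rtriV {s : C} {w : V} (v : V) : StepV s w → StepC (.rtri v s) (.circ v w)
  | circ {v w : V} {t : C} : LStep v w t → StepC (.circ v w) t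

/-- `t ⇒ t'` between computations. -/
def StepsC : C → C → Prop := Relation.ReflTransGen StepC

/-- `t ⇒ v`: `t` reduces in finitely many steps to the value `v`. -/
def StepsV (t : C) (v : V) : Prop := ∃ t', StepsC t t' ∧ StepV t' v

/-- `t⇓`: the computation `t` reduces to some value. -/
def ConvC (t : C) : Prop := ∃ v, StepsV t v

/-- Applicative simulations for xCL_fg. -/
def IsSim (RV : V → V → Prop) (RC : C → C → Prop) : Prop :=
  (∀ v w, RV v w → ∀ u t, LStep v u t → ∃ s, LStep w u s ∧ RC t s) ∧
  (∀ t s, RC t s →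
    (∀ v, StepV t v → ∃ w, StepsV s w ∧ RV v w) ∧
    (∀ t', StepC t t' → ∃ s', StepsC s s' ∧ RC t' s'))

/-- Applicative similarity on values. -/
def AppSimV (v w : V) : Prop := ∃ RV RC, IsSim RV RC ∧ RV v w

/-- Applicative similarity on computations. -/
def AppSimC (t s : C) : Prop := ∃ RV RC, IsSim RV RC ∧ RC t s

/-- A sorted relation is a congruence if it is compatible with all operators of both sorts. -/
def IsCong (RV : V → V → Prop) (RC : C → C → Prop) : Prop :=
  RV .S .S ∧ RV .K .K ∧ RV .I .I ∧
  (∀ t s, RC t s → RV (.K1 t) (.K1 s)) ∧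
  (∀ t s, RC t s → RV (.S1 t) (.S1 s)) ∧
  (∀ t s t' s', RC t s → RC t' s' → RV (.S2 t t') (.S2 s s')) ∧
  (∀ v w, RV v w → RC (.ret v) (.ret w)) ∧
  (∀ t s t' s', RC t s → RC t' s' → RC (.bull t t') (.bull s s')) ∧
  (∀ v w t s, RV v w → RC t s → RC (.rtri v t) (.rtri w s)) ∧
  (∀ v w t s, RV v w → RC t s → RC (.ltri t v) (.ltri s w)) ∧
  (∀ v w v' w', RV v w → RV v' w' → RC (.circ v v') (.circ w w'))

/-- Containment in the preorder `O` (the value component of `O` is total). -/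
def SubO (RV : V → V → Prop) (RC : C → C → Prop) : Prop :=
  (∀ v w, RV v w → True) ∧ (∀ t s, RC t s → ConvC t → ConvC s)

/-- The contextual preorder (value sort): the greatest congruence contained in `O`. -/
def CtxLeV (v w : V) : Prop := ∃ RV RC, IsCong RV RC ∧ SubO RV RC ∧ RV v w

/-- The contextual preorder (computation sort). -/
def CtxLeC (t s : C) : Prop := ∃ RV RC, IsCong RV RC ∧ SubO RV RC ∧ RC t s

/-- The step-indexed approximations `Lⁿ = (Lⁿ_v, Lⁿ_c)`. -/
def LrelN : ℕ → (V → V → Prop) × (C → C → Prop)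
  | 0 => (fun _ _ => True, fun _ _ => True)
  | n+1 =>
    ( fun v w => ∀ u z, (LrelN n).1 u z → ∀ t, LStep v u t →
        ∃ s, LStep w z s ∧ (LrelN n).2 t s,
      fun t s =>
        (∀ v, StepV t v → ∃ w, StepsV s w ∧ (LrelN n).1 v w) ∧
        (∀ t', StepC t t' → ∃ s', StepsC s s' ∧ (LrelN n).2 t' s') )

/-- The step-indexed logical relation, value sort: `L_v = ⋂ₙ Lⁿ_v`. -/
def LV (v w : V) : Prop := ∀ n, (LrelN n).1 v w

/-- The step-indexed logical relation, computation sort: `L_c = ⋂ₙ Lⁿ_c`. -/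
def LC (t s : C) : Prop := ∀ n, (LrelN n).2 t s

end FG

namespace FG

theorem appSim_isSim : IsSim AppSimV AppSimC := by
  refine ⟨?_, ?_⟩
  · rintro v w ⟨RV, RC, h, hvw⟩ u t ht
    obtain ⟨s, hs, hr⟩ := h.1 v w hvw u t ht
    exact ⟨s, hs, RV, RC, h, hr⟩
  · rintro t s ⟨RV, RC, h, hts⟩
    refine ⟨fun v hv => ?_, fun t' ht' => ?_⟩
    · obtain ⟨w, hw, hr⟩ := (h.2 t s hts).1 v hv
      exact ⟨w, hw, RV, RC, h, hr⟩
    · obtain ⟨w, hw, hr⟩ := (h.2 t s hts).2 t' ht'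
      exact ⟨w, hw, RV, RC, h, hr⟩

theorem isSim_eq : IsSim Eq Eq := by
  refine ⟨?_, ?_⟩
  · rintro v w rfl u t ht
    exact ⟨t, ht, rfl⟩
  · rintro t s rfl
    exact ⟨fun v hv => ⟨v, ⟨t, Relation.ReflTransGen.refl, hv⟩, rfl⟩,
      fun t' ht' => ⟨t', Relation.ReflTransGen.single ht', rfl⟩⟩

theorem AppSimV.rfl' (v : V) : AppSimV v v := ⟨_, _, isSim_eq, rfl⟩
theorem AppSimC.rfl' (t : C) : AppSimC t t := ⟨_, _, isSim_eq, rfl⟩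

theorem AppSimC.steps {t s t' : C} (h : AppSimC t s) (ht : StepsC t t') :
    ∃ s', StepsC s s' ∧ AppSimC t' s' := by
  induction ht with
  | refl => exact ⟨s, Relation.ReflTransGen.refl, h⟩
  | tail _ hbc ih =>
    obtain ⟨s1, hs1, h1⟩ := ih
    obtain ⟨s2, hs2, h2⟩ := (appSim_isSim.2 _ _ h1).2 _ hbc
    exact ⟨s2, Relation.ReflTransGen.trans hs1 hs2, h2⟩

theorem AppSimC.stepsV {t s : C} {v : V} (h : AppSimC t s) (ht : StepsV t v) :
    ∃ w, StepsV s w ∧ AppSimV v w := by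
  obtain ⟨t', ht', hv⟩ := ht
  obtain ⟨s', hs', h'⟩ := h.steps ht'
  obtain ⟨w, ⟨s2, hs2, hw⟩, hvw⟩ := (appSim_isSim.2 _ _ h').1 _ hv
  exact ⟨w, ⟨s2, Relation.ReflTransGen.trans hs' hs2, hw⟩, hvw⟩

theorem isSim_comp : IsSim (fun v w => ∃ x, AppSimV v x ∧ AppSimV x w)
    (fun t s => ∃ x, AppSimC t x ∧ AppSimC x s) := by
  refine ⟨?_, ?_⟩
  · rintro v w ⟨x, h1, h2⟩ u t ht
    obtain ⟨r, hr, h3⟩ := appSim_isSim.1 _ _ h1 _ _ ht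
    obtain ⟨s, hs, h4⟩ := appSim_isSim.1 _ _ h2 _ _ hr
    exact ⟨s, hs, r, h3, h4⟩
  · rintro t s ⟨x, h1, h2⟩
    refine ⟨fun v hv => ?_, fun t' ht' => ?_⟩
    · obtain ⟨r, hr, h3⟩ := (appSim_isSim.2 _ _ h1).1 _ hv
      obtain ⟨w, hw, h4⟩ := h2.stepsV hr
      exact ⟨w, hw, r, h3, h4⟩
    · obtain ⟨r, hr, h3⟩ := (appSim_isSim.2 _ _ h1).2 _ ht'
      obtain ⟨w, hw, h4⟩ := h2.steps hr
      exact ⟨w, hw, r, h3, h4⟩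

theorem AppSimV.tr {a b c : V} (h : AppSimV a b) (hbc : AppSimV b c) : AppSimV a c :=
  ⟨_, _, isSim_comp, b, h, hbc⟩
theorem AppSimC.tr {a b c : C} (h : AppSimC a b) (hbc : AppSimC b c) : AppSimC a c :=
  ⟨_, _, isSim_comp, b, h, hbc⟩

mutual
/-- Howe closure of applicative similarity, values. -/
inductive HV : V → V → Prop
  | I {w : V} : AppSimV .I w → HV .I w
  | K {w : V} : AppSimV .K w → HV .K w
  | S {w : V} : AppSimV .S w → HV .S w
  | K1 {t t' : C} {w : V} : HC t t' → AppSimV (.K1 t') w → HV (.K1 t) w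
  | S1 {t t' : C} {w : V} : HC t t' → AppSimV (.S1 t') w → HV (.S1 t) w
  | S2 {s s' t t' : C} {w : V} : HC s s' → HC t t' → AppSimV (.S2 s' t') w → HV (.S2 s t) w
/-- Howe closure of applicative similarity, computations. -/
inductive HC : C → C → Prop
  | ret {v v' : V} {q : C} : HV v v' → AppSimC (.ret v') q → HC (.ret v) q
  | bull {t t' s s' q : C} : HC t t' → HC s s' → AppSimC (.bull t' s') q → HC (.bull t s) q
  | rtri {v v' : V} {s s' q : C} : HV v v' → HC s s' → AppSimC (.rtri v' s') q →
      HC (.rtri v s) q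
  | ltri {v v' : V} {s s' q : C} : HC s s' → HV v v' → AppSimC (.ltri s' v') q →
      HC (.ltri s v) q
  | circ {v v' w w' : V} {q : C} : HV v v' → HV w w' → AppSimC (.circ v' w') q →
      HC (.circ v w) q
end

theorem HV.tr {a b c : V} (h : HV a b) (h' : AppSimV b c) : HV a c := by
  cases h with
  | I h => exact .I (h.tr h')
  | K h => exact .K (h.tr h')
  | S h => exact .S (h.tr h')
  | K1 h1 h => exact .K1 h1 (h.tr h')
  | S1 h1 h => exact .S1 h1 (h.tr h')
  | S2 h1 h2 h => exact .S2 h1 h2 (h.tr h')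

theorem HC.tr {a b c : C} (h : HC a b) (h' : AppSimC b c) : HC a c := by
  cases h with
  | ret h1 h => exact .ret h1 (h.tr h')
  | bull h1 h2 h => exact .bull h1 h2 (h.tr h')
  | rtri h1 h2 h => exact .rtri h1 h2 (h.tr h')
  | ltri h1 h2 h => exact .ltri h1 h2 (h.tr h')
  | circ h1 h2 h => exact .circ h1 h2 (h.tr h')

mutual
theorem HV.rfl' : (v : V) → HV v v
  | .I => .I (AppSimV.rfl' _)
  | .K => .K (AppSimV.rfl' _)
  | .S => .S (AppSimV.rfl' _)
  | .K1 t => .K1 (HC.rfl' t) (AppSimV.rfl' _)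
  | .S1 t => .S1 (HC.rfl' t) (AppSimV.rfl' _)
  | .S2 s t => .S2 (HC.rfl' s) (HC.rfl' t) (AppSimV.rfl' _)
theorem HC.rfl' : (t : C) → HC t t
  | .ret v => .ret (HV.rfl' v) (AppSimC.rfl' _)
  | .bull s t => .bull (HC.rfl' s) (HC.rfl' t) (AppSimC.rfl' _)
  | .rtri v t => .rtri (HV.rfl' v) (HC.rfl' t) (AppSimC.rfl' _)
  | .ltri t v => .ltri (HC.rfl' t) (HV.rfl' v) (AppSimC.rfl' _)
  | .circ v w => .circ (HV.rfl' v) (HV.rfl' w) (AppSimC.rfl' _)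
end

theorem HV.key {v w u u' : V} {t : C} (h : HV v w) (hu : HV u u') (ht : LStep v u t) :
    ∃ s, LStep w u' s ∧ HC t s := by
  have rc := AppSimC.rfl'
  have rv := AppSimV.rfl'
  cases ht with
  | S =>
    cases h with
    | S h =>
      obtain ⟨s, hs, h3⟩ := appSim_isSim.1 _ _ h _ _ (LStep.S u')
      exact ⟨s, hs, .ret (.S1 (.ret hu (rc _)) (rv _)) h3⟩
  | S1 t =>
    cases h with
    | S1 h1 h =>
      obtain ⟨s, hs, h3⟩ := appSim_isSim.1 _ _ h _ _ (LStep.S1 _ u')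
      exact ⟨s, hs, .ret (.S2 h1 (.ret hu (rc _)) (rv _)) h3⟩
  | S2 t s =>
    cases h with
    | S2 h1 h2 h =>
      obtain ⟨s, hs, h3⟩ := appSim_isSim.1 _ _ h _ _ (LStep.S2 _ _ u')
      exact ⟨s, hs, .bull (.ltri h1 hu (rc _)) (.ltri h2 hu (rc _)) h3⟩
  | K =>
    cases h with
    | K h =>
      obtain ⟨s, hs, h3⟩ := appSim_isSim.1 _ _ h _ _ (LStep.K u')
      exact ⟨s, hs, .ret (.K1 (.ret hu (rc _)) (rv _)) h3⟩
  | K1 =>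
    cases h with
    | K1 h1 h =>
      obtain ⟨s, hs, h3⟩ := appSim_isSim.1 _ _ h _ _ (LStep.K1 _ u')
      exact ⟨s, hs, h1.tr h3⟩
  | I =>
    cases h with
    | I h =>
      obtain ⟨s, hs, h3⟩ := appSim_isSim.1 _ _ h _ _ (LStep.I u')
      exact ⟨s, hs, .ret hu h3⟩

theorem HC.stepV {t s : C} {v : V} (h : HC t s) (ht : StepV t v) :
    ∃ w, StepsV s w ∧ HV v w := by
  cases ht
  cases h with
  | ret h1 h =>
    obtain ⟨w, hw, h3⟩ := (appSim_isSim.2 _ _ h).1 _ (StepV.ret _)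
    exact ⟨w, hw, h1.tr h3⟩

theorem steps_bull {t t' : C} (s : C) (h : StepsC t t') : StepsC (.bull t s) (.bull t' s) :=
  Relation.ReflTransGen.lift (fun x => C.bull x s) (fun _ _ h => StepC.bullL s h) _ _ h
theorem steps_ltri {t t' : C} (v : V) (h : StepsC t t') : StepsC (.ltri t v) (.ltri t' v) :=
  Relation.ReflTransGen.lift (fun x => C.ltri x v) (fun _ _ h => StepC.ltriL v h) _ _ h
theorem steps_rtri {t t' : C} (v : V) (h : StepsC t t') : StepsC (.rtri v t) (.rtri v t') :=
  Relation.ReflTransGen.lift (fun x => C.rtri v x) (fun _ _ h => StepC.rtriR v h) _ _ h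

theorem HC.stepC {t t' : C} (ht : StepC t t') : ∀ {s : C}, HC t s →
    ∃ s', StepsC s s' ∧ HC t' s' := by
  have rc := AppSimC.rfl'
  induction ht with
  | bullL s _ ih =>
    intro q h
    cases h with
    | bull h1 h2 h =>
      obtain ⟨r, hr, h3⟩ := ih h1
      obtain ⟨q', hq', h4⟩ := h.steps (steps_bull _ hr)
      exact ⟨q', hq', .bull h3 h2 h4⟩
  | bullV s hv =>
    intro q h
    cases h with
    | bull h1 h2 h =>
      obtain ⟨w, ⟨r, hr, hw⟩, h3⟩ := h1.stepV hv
      obtain ⟨q', hq', h4⟩ := h.steps (Relation.ReflTransGen.tail (steps_bull _ hr) (.bullV _ hw))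
      exact ⟨q', hq', .rtri h3 h2 h4⟩
  | ltriL v _ ih =>
    intro q h
    cases h with
    | ltri h1 h2 h =>
      obtain ⟨r, hr, h3⟩ := ih h1
      obtain ⟨q', hq', h4⟩ := h.steps (steps_ltri _ hr)
      exact ⟨q', hq', .ltri h3 h2 h4⟩
  | ltriV w hv =>
    intro q h
    cases h with
    | ltri h1 h2 h =>
      obtain ⟨w, ⟨r, hr, hw⟩, h3⟩ := h1.stepV hv
      obtain ⟨q', hq', h4⟩ := h.steps (Relation.ReflTransGen.tail (steps_ltri _ hr) (.ltriV _ hw))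
      exact ⟨q', hq', .circ h3 h2 h4⟩
  | rtriR v _ ih =>
    intro q h
    cases h with
    | rtri h1 h2 h =>
      obtain ⟨r, hr, h3⟩ := ih h2
      obtain ⟨q', hq', h4⟩ := h.steps (steps_rtri _ hr)
      exact ⟨q', hq', .rtri h1 h3 h4⟩
  | rtriV v hv =>
    intro q h
    cases h with
    | rtri h1 h2 h =>
      obtain ⟨w, ⟨r, hr, hw⟩, h3⟩ := h2.stepV hv
      obtain ⟨q', hq', h4⟩ := h.steps (Relation.ReflTransGen.tail (steps_rtri _ hr) (.rtriV _ hw))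
      exact ⟨q', hq', .circ h1 h3 h4⟩
  | circ hl =>
    intro q h
    cases h with
    | circ h1 h2 h =>
      obtain ⟨r, hr, h3⟩ := h1.key h2 hl
      obtain ⟨q', hq', h4⟩ := h.steps (Relation.ReflTransGen.single (.circ hr))
      exact ⟨q', hq', h3.tr h4⟩

theorem howe_isSim : IsSim HV HC :=
  ⟨fun _ _ h u _ ht => h.key (HV.rfl' u) ht,
   fun _ _ h => ⟨fun _ hv => h.stepV hv, fun _ ht => HC.stepC ht h⟩⟩

theorem HV.app {v w : V} (h : HV v w) : AppSimV v w := ⟨_, _, howe_isSim, h⟩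
theorem HC.app {v w : C} (h : HC v w) : AppSimC v w := ⟨_, _, howe_isSim, h⟩
theorem AppSimV.howe {v w : V} (h : AppSimV v w) : HV v w := (HV.rfl' v).tr h
theorem AppSimC.howe {v w : C} (h : AppSimC v w) : HC v w := (HC.rfl' v).tr h

end FG

open FG in
/-- Applicative similarity for xCL_fg is a congruence. -/
theorem fg_appSim_isCong :
    AppSimV .S .S ∧ AppSimV .K .K ∧ AppSimV .I .I ∧
    (∀ t s, AppSimC t s → AppSimV (.K1 t) (.K1 s)) ∧
    (∀ t s, AppSimC t s → AppSimV (.S1 t) (.S1 s)) ∧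
    (∀ t s t' s', AppSimC t s → AppSimC t' s' → AppSimV (.S2 t t') (.S2 s s')) ∧
    (∀ t s t' s', AppSimC t s → AppSimC t' s' → AppSimC (.bull t t') (.bull s s')) ∧
    (∀ v w, AppSimV v w → AppSimC (.ret v) (.ret w)) ∧
    (∀ v w t s, AppSimV v w → AppSimC t s → AppSimC (.rtri v t) (.rtri w s)) ∧
    (∀ v w t s, AppSimV v w → AppSimC t s → AppSimC (.ltri t v) (.ltri s w)) ∧
    (∀ v w v' w', AppSimV v w → AppSimV v' w' → AppSimC (.circ v v') (.circ w w')) := by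
  have rc := AppSimC.rfl'
  have rv := AppSimV.rfl'
  exact ⟨rv _, rv _, rv _,
    fun _ _ h => (HV.K1 h.howe (rv _)).app,
    fun _ _ h => (HV.S1 h.howe (rv _)).app,
    fun _ _ _ _ h h' => (HV.S2 h.howe h'.howe (rv _)).app,
    fun _ _ _ _ h h' => (HC.bull h.howe h'.howe (rc _)).app,
    fun _ _ h => (HC.ret h.howe (rc _)).app,
    fun _ _ _ _ h h' => (HC.rtri h.howe h'.howe (rc _)).app,
    fun _ _ _ _ h h' => (HC.ltri h'.howe h.howe (rc _)).app,
    fun _ _ _ _ h h' => (HC.circ h.howe h'.howe (rc _)).app⟩
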